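/- Let b = (b₁,b₂) and b' = (b₁',b₂') be elements of ℤ², both of type 0 (i.e. b₁ ≠ 0, b₂ ≠ 0, b₀ := b₁ − kb₂ ≠ 0, and likewise for b'). If f_b(u) = f_{b'}(u) for every real u, then b ≡ b', i.e. either b' = b, or b₁' = b₁ − kb₂ and b₂' = −b₂. -/

import Mathlib

noncomputable section

/-- `λ = τ - kσ`, the area parameter of the second section of the Hirzebruch surface. -/
def lamH (k : ℤ) (σ τ : ℝ) : ℝ := τ - (k : ℝ) * σ

/-- First coordinate of the centroid of the moment trapezoid with vertices
`(0,0), (σ,0), (0,τ), (σ,λ)`. -/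
def c₁H (k : ℤ) (σ τ : ℝ) : ℝ := σ * (τ + 2 * lamH k σ τ) / (3 * (τ + lamH k σ τ))

/-- Second coordinate of the centroid of the moment trapezoid. -/
def c₂H (k : ℤ) (σ τ : ℝ) : ℝ :=
  (τ ^ 2 + τ * lamH k σ τ + lamH k σ τ ^ 2) / (3 * (τ + lamH k σ τ))

/-- `q_b = c₁ b₁ + c₂ b₂`. -/
def qH (k : ℤ) (σ τ : ℝ) (b₁ b₂ : ℤ) : ℝ :=
  c₁H k σ τ * (b₁ : ℝ) + c₂H k σ τ * (b₂ : ℝ)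

/-- `f_b(u) = u² S_{ψ_b}(u)` for `b = (b₁,b₂)` of type 0 on the Hirzebruch surface. -/
def fH (k : ℤ) (σ τ : ℝ) (b₁ b₂ : ℤ) (u : ℝ) : ℝ :=
  Real.exp (qH k σ τ b₁ b₂ * u) *
    (1 / ((b₁ : ℝ) * (b₂ : ℝ))
      - Real.exp (-(τ * (b₂ : ℝ) * u)) / (((b₁ : ℝ) - (k : ℝ) * (b₂ : ℝ)) * (b₂ : ℝ))
      - Real.exp (-(σ * (b₁ : ℝ) * u)) / ((b₁ : ℝ) * (b₂ : ℝ))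
      + Real.exp (-((τ * (b₂ : ℝ) + σ * ((b₁ : ℝ) - (k : ℝ) * (b₂ : ℝ))) * u)) /
          (((b₁ : ℝ) - (k : ℝ) * (b₂ : ℝ)) * (b₂ : ℝ)))

/-- `b = (b₁,b₂)` is of type 0: `b₁ ≠ 0`, `b₂ ≠ 0` and `b₀ = b₁ - k b₂ ≠ 0`. -/
def IsType0 (k b₁ b₂ : ℤ) : Prop := b₁ ≠ 0 ∧ b₂ ≠ 0 ∧ b₁ - k * b₂ ≠ 0

end

/-!
Up to the factor `e^{qu}`, `f_b` is an exponential sum whose frequencies are the values of `-b` at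
the four vertices of the trapezoid, so by linear independence of exponentials the equality of the
functions is an equality of finitely supported weight functions on `ℝ`. The affine involution
`(x, y) ↦ (x, τ - kx - y)` of the trapezoid fixes the centroid and exchanges the two elements of an
equivalence class, so one may assume `b₂, b₂' > 0`. The edges `y = 0` and `y = τ - kx` then each
contribute a pair of opposite weights, of sizes `1 / (|b₁| b₂)` and `1 / (|b₀| b₂)`. Among the
values of `b` at the vertices the smallest belongs to the first edge and the largest to the
second, so both sizes are invariants. If they differ, the two remaining values can be told apart
as well, and the width `σ |b₁|` of the first edge is a further invariant. If they agree, then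
`b₁ = -b₀` because `k b₂ ≠ 0`. In both cases `b` can be recovered.
-/

section Dipole

variable {α M : Type*} [AddCommGroup M]

/-- The finitely supported function with value `a` at `s` and `-a` at `t`: the contribution to a
localization sum of two fixed points joined by an invariant sphere. -/
noncomputable def dipole (a : M) (s t : α) : α →₀ M :=
  Finsupp.single s a - Finsupp.single t a

lemma neg_dipole (a : M) (s t : α) : -dipole a s t = dipole a t s := neg_sub _ _

lemma dipole_neg (a : M) (s t : α) : dipole (-a) s t = dipole a t s := by
  simp only [dipole, Finsupp.single_neg]
  abel

variable {a a' c c' : M} {L L' m m' n n' R R' : α}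

lemma inner_eq_of_dipole_add_dipole_eq (ha : a ≠ 0) (hc : c ≠ 0) (hac : a ≠ c) (hac' : a + c ≠ 0)
    (h : dipole a L m + dipole c R n = dipole a L m' + dipole c R n') :
    m = m' ∧ n = n' := by
  have hsingle : Finsupp.single m a + Finsupp.single n c
      = Finsupp.single m' a + Finsupp.single n' c := by
    simpa only [dipole, sub_add_sub_comm, sub_right_inj] using h
  simpa [Finsupp.single_add_single_eq_single_add_single ha hc, hac, hac'] using hsingle

variable [LinearOrder α]

lemma dipole_add_dipole_apply_left (hm : m ∈ Set.Ioo L R) (hn : n ∈ Set.Ioo L R) :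
    (dipole a L m + dipole c R n) L = a := by
  simp [dipole, hm.1.ne', hn.1.ne', (hm.1.trans hm.2).ne']

lemma isLeast_support_dipole_add_dipole (ha : a ≠ 0) (hm : m ∈ Set.Ioo L R)
    (hn : n ∈ Set.Ioo L R) :
    IsLeast ((dipole a L m + dipole c R n).support : Set α) L := by
  refine ⟨by simpa [dipole_add_dipole_apply_left hm hn] using ha, fun t ht ↦ ?_⟩
  by_contra! htL
  have htR : t < R := htL.trans (hm.1.trans hm.2)
  simp [dipole, htL.ne', htR.ne', (htL.trans hm.1).ne', (htL.trans hn.1).ne'] at ht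

lemma left_eq_of_dipole_add_dipole_eq (ha : a ≠ 0) (ha' : a' ≠ 0)
    (hm : m ∈ Set.Ioo L R) (hn : n ∈ Set.Ioo L R)
    (hm' : m' ∈ Set.Ioo L' R') (hn' : n' ∈ Set.Ioo L' R')
    (h : dipole a L m + dipole c R n = dipole a' L' m' + dipole c' R' n') :
    L = L' ∧ a = a' := by
  have hL : L = L' := (isLeast_support_dipole_add_dipole ha hm hn).unique
    (h ▸ isLeast_support_dipole_add_dipole ha' hm' hn')
  subst hL
  have ha_eq := DFunLike.congr_fun h L
  rw [dipole_add_dipole_apply_left hm hn, dipole_add_dipole_apply_left hm' hn'] at ha_eq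
  exact ⟨rfl, ha_eq⟩

lemma right_eq_of_dipole_add_dipole_eq (hc : c ≠ 0) (hc' : c' ≠ 0)
    (hm : m ∈ Set.Ioo L R) (hn : n ∈ Set.Ioo L R)
    (hm' : m' ∈ Set.Ioo L' R') (hn' : n' ∈ Set.Ioo L' R')
    (h : dipole a L m + dipole c R n = dipole a' L' m' + dipole c' R' n') :
    R = R' ∧ c = c' :=
  left_eq_of_dipole_add_dipole_eq (α := αᵒᵈ) hc hc' hn.symm hm.symm hn'.symm hm'.symm
    ((add_comm _ _).trans (h.trans (add_comm _ _)))

end Dipole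

lemma dipole_eq_dipole_min_max {σ x y s t : ℝ} (hσ : 0 < σ) (hst : t - s = σ * x) :
    dipole (1 / (x * y)) s t = dipole (1 / (|x| * y)) (min s t) (max s t) := by
  rcases le_total 0 x with hx | hx
  · have hle : s ≤ t := sub_nonneg.1 (hst ▸ mul_nonneg hσ.le hx)
    rw [abs_of_nonneg hx, min_eq_left hle, max_eq_right hle]
  · have hle : t ≤ s := sub_nonpos.1 (hst ▸ mul_nonpos_of_nonneg_of_nonpos hσ.le hx)
    rw [abs_of_nonpos hx, min_eq_right hle, max_eq_left hle, neg_mul, one_div_neg_eq_neg_one_div,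
      dipole_neg]

/-- The exponential sum `u ↦ ∑ x, w x * e^{-xu}` with weights `w`. -/
noncomputable def expSum : (ℝ →₀ ℝ) →ₗ[ℝ] ℝ → ℝ :=
  Finsupp.linearCombination ℝ fun x u ↦ Real.exp (-(x * u))

lemma expSum_single (x a u : ℝ) :
    expSum (Finsupp.single x a) u = a * Real.exp (-(x * u)) := by
  simp [expSum]

lemma expSum_injective : Function.Injective expSum := by
  let character (x : ℝ) : Multiplicative ℝ →* ℝ :=
    { toFun u := Real.exp (-(x * u.toAdd))
      map_one' := by simp
      map_mul' u v := by simp only [toAdd_mul, mul_add, neg_add, Real.exp_add] }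
  have hinj : Function.Injective character := fun x y hxy ↦ by
    simpa [character] using DFunLike.congr_fun hxy (Multiplicative.ofAdd 1)
  exact (linearIndependent_monoidHom (Multiplicative ℝ) ℝ).comp character hinj

lemma two_mul_abs_eq_of_abs_eq_abs_sub {x a : ℝ} (ha : a ≠ 0) (h : |x| = |x - a|) :
    2 * |x| = |a| := by
  have hxa : 2 * x = a := by
    refine mul_left_cancel₀ ha ?_
    linear_combination (sq_eq_sq_iff_abs_eq_abs _ _).2 h
  rw [← hxa, abs_mul, abs_two]

lemma eq_and_eq_of_abs_mul_eq {κ x y x' y' : ℝ} (hκ : κ ≠ 0) (hx : x ≠ 0) (hy : 0 < y)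
    (hy' : 0 < y') (h₁ : |x| * y = |x'| * y') (h₀ : |x - κ * y| * y = |x' - κ * y'| * y')
    (habs : |x| ≠ |x - κ * y| → |x| = |x'|) :
    x' = x ∧ y' = y := by
  have hyy : y' = y := by
    by_cases hxd : |x| = |x - κ * y|
    · have hxd' : |x'| = |x' - κ * y'| := by
        rw [← mul_left_inj' hy'.ne', ← h₁, ← h₀, hxd]
      have hκx := two_mul_abs_eq_of_abs_eq_abs_sub (mul_ne_zero hκ hy.ne') hxd
      have hκx' := two_mul_abs_eq_of_abs_eq_abs_sub (mul_ne_zero hκ hy'.ne') hxd'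
      rw [abs_mul, abs_of_pos hy] at hκx
      rw [abs_mul, abs_of_pos hy'] at hκx'
      have hsq : |κ| * y' ^ 2 = |κ| * y ^ 2 := by
        linear_combination y * hκx - y' * hκx' - 2 * h₁
      exact (sq_eq_sq₀ hy'.le hy.le).1 (mul_left_cancel₀ (abs_ne_zero.2 hκ) hsq)
    · rw [← habs hxd] at h₁
      exact (mul_left_cancel₀ (abs_ne_zero.2 hx) h₁).symm
  subst hyy
  have hsq₁ := (sq_eq_sq_iff_abs_eq_abs _ _).2 (mul_right_cancel₀ hy.ne' h₁)
  have hsq₀ := (sq_eq_sq_iff_abs_eq_abs _ _).2 (mul_right_cancel₀ hy.ne' h₀)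
  refine ⟨mul_left_cancel₀ (mul_ne_zero hκ hy.ne') ?_, rfl⟩
  linear_combination (hsq₀ - hsq₁) / 2

/-- The value of the linear form `b` at the point `c` of the moment plane; it is `q_b` when `c` is
the centroid of the trapezoid. -/
def momentValue (c b : ℝ × ℝ) : ℝ := c.1 * b.1 + c.2 * b.2

/-- The function `f_b` of `fH` for real parameters `κ` and `b`, and with an arbitrary point `c` of
the moment plane in place of the centroid. -/
noncomputable def localizationSum (κ σ τ : ℝ) (c b : ℝ × ℝ) (u : ℝ) : ℝ :=
  Real.exp (momentValue c b * u) *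
    (1 / (b.1 * b.2)
      - Real.exp (-(τ * b.2 * u)) / ((b.1 - κ * b.2) * b.2)
      - Real.exp (-(σ * b.1 * u)) / (b.1 * b.2)
      + Real.exp (-((τ * b.2 + σ * (b.1 - κ * b.2)) * u)) / ((b.1 - κ * b.2) * b.2))

/-- The weights of `localizationSum` as an exponential sum, placed at the values of `b` at the
vertices of the trapezoid relative to its value at `c`. The first dipole is the edge `y = 0`, the
second the edge `y = τ - κx`. -/
noncomputable def vertexWeights (κ σ τ : ℝ) (c b : ℝ × ℝ) : ℝ →₀ ℝ :=
  dipole (1 / (b.1 * b.2)) (-momentValue c b) (σ * b.1 - momentValue c b)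
    - dipole (1 / ((b.1 - κ * b.2) * b.2)) (τ * b.2 - momentValue c b)
        (τ * b.2 + σ * (b.1 - κ * b.2) - momentValue c b)

/-- The real analogue of `IsType0`: the weights at all four fixed points are nonzero. -/
def HasNonzeroWeights (κ : ℝ) (b : ℝ × ℝ) : Prop :=
  b.1 ≠ 0 ∧ b.2 ≠ 0 ∧ b.1 - κ * b.2 ≠ 0

/-- The linear part of the affine involution `(x, y) ↦ (x, τ - κx - y)` of the trapezoid, acting
on linear forms `b`. -/
def trapezoidReflection (κ : ℝ) (b : ℝ × ℝ) : ℝ × ℝ := (b.1 - κ * b.2, -b.2)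

section Reflection

variable {κ : ℝ}

lemma trapezoidReflection_involutive : Function.Involutive (trapezoidReflection κ) := fun b ↦ by
  simp [trapezoidReflection]

lemma HasNonzeroWeights.trapezoidReflection {b : ℝ × ℝ} (hb : HasNonzeroWeights κ b) :
    HasNonzeroWeights κ (trapezoidReflection κ b) :=
  ⟨hb.2.2, neg_ne_zero.2 hb.2.1, by simpa [_root_.trapezoidReflection] using hb.1⟩

variable {τ : ℝ} {c : ℝ × ℝ}

lemma momentValue_trapezoidReflection (hc : κ * c.1 + 2 * c.2 = τ) (b : ℝ × ℝ) :
    momentValue c (trapezoidReflection κ b) = momentValue c b - τ * b.2 := by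
  simp only [momentValue, trapezoidReflection]
  linear_combination -b.2 * hc

lemma vertexWeights_trapezoidReflection (hc : κ * c.1 + 2 * c.2 = τ) (σ : ℝ) (b : ℝ × ℝ) :
    vertexWeights κ σ τ c (trapezoidReflection κ b) = vertexWeights κ σ τ c b := by
  simp only [vertexWeights, momentValue_trapezoidReflection hc]
  generalize momentValue c b = q
  simp only [trapezoidReflection, mul_neg, one_div_neg_eq_neg_one_div, dipole_neg, sub_neg_eq_add,
    sub_add_cancel]
  rw [sub_eq_neg_add, neg_dipole, sub_eq_add_neg (dipole (1 / (b.1 * b.2)) _ _), neg_dipole]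
  ring_nf

end Reflection

section Vertices

variable {κ σ τ : ℝ} {c b b' : ℝ × ℝ}

lemma localizationSum_eq_expSum :
    localizationSum κ σ τ c b = expSum (vertexWeights κ σ τ c b) := by
  ext u
  have exp_sub_mul (q v : ℝ) :
      Real.exp (-((v - q) * u)) = Real.exp (q * u) * Real.exp (-(v * u)) := by
    rw [← Real.exp_add]
    ring_nf
  simp only [localizationSum, vertexWeights, dipole, map_sub, Pi.sub_apply, expSum_single,
    exp_sub_mul, neg_mul, neg_neg]
  ring

lemma exists_vertexWeights_eq_dipole_add_dipole (hσ : 0 < σ) (hτ : 0 < τ) (hlam : 0 < τ - κ * σ)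
    (hb : HasNonzeroWeights κ b) (hb₂ : 0 < b.2) :
    ∃ L m n R : ℝ, m ∈ Set.Ioo L R ∧ n ∈ Set.Ioo L R ∧ m - L = σ * |b.1| ∧
      vertexWeights κ σ τ c b =
        dipole (1 / (|b.1| * b.2)) L m + dipole (1 / (|b.1 - κ * b.2| * b.2)) R n := by
  obtain ⟨hb₁, -, hb₀⟩ := hb
  unfold vertexWeights
  generalize momentValue c b = q
  have hleft : -q < τ * b.2 - q := by linarith [mul_pos hτ hb₂]
  have hright : σ * b.1 - q < τ * b.2 + σ * (b.1 - κ * b.2) - q := by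
    linarith [mul_pos hlam hb₂]
  have hbottom : -q ≠ σ * b.1 - q := by simpa [sub_eq_neg_add] using ⟨hσ.ne', hb₁⟩
  have htop : τ * b.2 - q ≠ τ * b.2 + σ * (b.1 - κ * b.2) - q := by
    simpa using ⟨hσ.ne', hb₀⟩
  refine ⟨_, _, _, _, ⟨min_lt_max.2 hbottom, max_lt_max hleft hright⟩,
    ⟨min_lt_min hleft hright, min_lt_max.2 htop⟩, ?_, ?_⟩
  · rw [max_sub_min_eq_abs, sub_neg_eq_add, sub_add_cancel, abs_mul, abs_of_pos hσ]
  · rw [dipole_eq_dipole_min_max (x := b.1) hσ (by ring),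
      dipole_eq_dipole_min_max (x := b.1 - κ * b.2) hσ (by ring), sub_eq_add_neg, neg_dipole]

lemma eq_of_vertexWeights_eq_of_pos (hκ : κ ≠ 0) (hσ : 0 < σ) (hτ : 0 < τ) (hlam : 0 < τ - κ * σ)
    (hb : HasNonzeroWeights κ b) (hb' : HasNonzeroWeights κ b') (hb₂ : 0 < b.2) (hb₂' : 0 < b'.2)
    (h : vertexWeights κ σ τ c b = vertexWeights κ σ τ c b') :
    b' = b := by
  obtain ⟨L, m, n, R, hm, hn, hwidth, hw⟩ :=
    exists_vertexWeights_eq_dipole_add_dipole (c := c) hσ hτ hlam hb hb₂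
  obtain ⟨L', m', n', R', hm', hn', hwidth', hw'⟩ :=
    exists_vertexWeights_eq_dipole_add_dipole (c := c) hσ hτ hlam hb' hb₂'
  rw [hw, hw'] at h
  have pos_of_ne {x y : ℝ} (hx : x ≠ 0) (hy : 0 < y) : 0 < 1 / (|x| * y) := by positivity
  have ha := pos_of_ne hb.1 hb₂
  have hc := pos_of_ne hb.2.2 hb₂
  obtain ⟨rfl, ha_eq⟩ := left_eq_of_dipole_add_dipole_eq ha.ne' (pos_of_ne hb'.1 hb₂').ne'
    hm hn hm' hn' h
  obtain ⟨rfl, hc_eq⟩ := right_eq_of_dipole_add_dipole_eq hc.ne' (pos_of_ne hb'.2.2 hb₂').ne'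
    hm hn hm' hn' h
  refine Prod.ext_iff.2 (eq_and_eq_of_abs_mul_eq hκ hb.1 hb₂ hb₂' ?_ ?_ fun hne ↦ ?_)
  · simpa only [one_div, inv_inj] using ha_eq
  · simpa only [one_div, inv_inj] using hc_eq
  · rw [← ha_eq, ← hc_eq] at h
    have hac : 1 / (|b.1| * b.2) ≠ 1 / (|b.1 - κ * b.2| * b.2) := by
      simpa only [one_div, ne_eq, inv_inj, mul_left_inj' hb₂.ne'] using hne
    obtain ⟨rfl, -⟩ := inner_eq_of_dipole_add_dipole_eq ha.ne' hc.ne' hac (add_pos ha hc).ne' h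
    exact mul_left_cancel₀ hσ.ne' (hwidth.symm.trans hwidth')

end Vertices

/-- The condition `hc` says that `c` is fixed by the affine involution `(x, y) ↦ (x, τ - κx - y)`
of the trapezoid, as the centroid is. -/
theorem hirzebruch_type0_S_eq_implies_equiv_general
    {κ σ τ : ℝ} {c b b' : ℝ × ℝ} (hκ : κ ≠ 0) (hσ : 0 < σ) (hτ : 0 < τ)
    (hlam : 0 < τ - κ * σ) (hc : κ * c.1 + 2 * c.2 = τ)
    (hb : HasNonzeroWeights κ b) (hb' : HasNonzeroWeights κ b')
    (h : ∀ u : ℝ, localizationSum κ σ τ c b u = localizationSum κ σ τ c b' u) :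
    b' = b ∨ b' = trapezoidReflection κ b := by
  have hw : vertexWeights κ σ τ c b = vertexWeights κ σ τ c b' := by
    apply expSum_injective
    rw [← localizationSum_eq_expSum, ← localizationSum_eq_expSum]
    exact funext h
  have hreflect := vertexWeights_trapezoidReflection hc σ
  have hinv := trapezoidReflection_involutive (κ := κ)
  have eq_of_pos {p p' : ℝ × ℝ} := eq_of_vertexWeights_eq_of_pos (c := c) (b := p) (b' := p')
    hκ hσ hτ hlam
  rcases hb.2.1.lt_or_gt with hneg | hpos <;> rcases hb'.2.1.lt_or_gt with hneg' | hpos'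
  · exact .inl <| hinv.injective <| eq_of_pos hb.trapezoidReflection hb'.trapezoidReflection
      (neg_pos.2 hneg) (neg_pos.2 hneg') (by rw [hreflect, hreflect, hw])
  · exact .inr <| eq_of_pos hb.trapezoidReflection hb' (neg_pos.2 hneg) hpos' (by rw [hreflect, hw])
  · exact .inr <| hinv.eq_iff.1 <|
      eq_of_pos hb hb'.trapezoidReflection hpos (neg_pos.2 hneg') (by rw [hreflect, hw])
  · exact .inl <| eq_of_pos hb hb' hpos hpos' hw

lemma centroid_mem_reflection_axis {k : ℤ} {σ τ : ℝ} (hτ : 0 < τ) (hlam : 0 < lamH k σ τ) :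
    k * c₁H k σ τ + 2 * c₂H k σ τ = τ := by
  have hkσ : (k : ℝ) * σ = τ - lamH k σ τ := by simp [lamH]
  have hsum : τ + lamH k σ τ ≠ 0 := (add_pos hτ hlam).ne'
  unfold c₁H c₂H
  field_simp
  linear_combination (τ + 2 * lamH k σ τ) * hkσ

lemma fH_eq_localizationSum (k : ℤ) (σ τ : ℝ) (b₁ b₂ : ℤ) :
    fH k σ τ b₁ b₂ = localizationSum k σ τ (c₁H k σ τ, c₂H k σ τ) (b₁, b₂) := rfl

lemma IsType0.hasNonzeroWeights {k b₁ b₂ : ℤ} (hb : IsType0 k b₁ b₂) :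
    HasNonzeroWeights k (b₁, b₂) := by
  simpa only [HasNonzeroWeights, IsType0] using mod_cast hb

/-- The type-0 part of Theorem 1.7 (Propositions 3.4–3.7 of the paper): for two type-0 elements
of `ℤ²`, equality of the functions `f_b = u² S_{ψ_b}` implies `b ≡ b'`, i.e. `b' = b` or
`b' = (b₁ - k b₂, -b₂)`. -/
theorem hirzebruch_type0_S_eq_implies_equiv
    (k : ℤ) (hk : k ≠ 0) (σ τ : ℝ) (hσ : 0 < σ) (hτ : 0 < τ) (hlam : 0 < lamH k σ τ)
    (b₁ b₂ b₁' b₂' : ℤ) (hb : IsType0 k b₁ b₂) (hb' : IsType0 k b₁' b₂')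
    (h : ∀ u : ℝ, fH k σ τ b₁ b₂ u = fH k σ τ b₁' b₂' u) :
    (b₁' = b₁ ∧ b₂' = b₂) ∨ (b₁' = b₁ - k * b₂ ∧ b₂' = -b₂) := by
  simp only [fH_eq_localizationSum] at h
  have hequiv := hirzebruch_type0_S_eq_implies_equiv_general (Int.cast_ne_zero.2 hk) hσ hτ hlam
    (centroid_mem_reflection_axis hτ hlam) hb.hasNonzeroWeights hb'.hasNonzeroWeights h
  simp only [trapezoidReflection, Prod.mk.injEq] at hequiv
  exact_mod_cast hequiv
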